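/- A finite collection of density matrices {ρ_k} on a finite-dimensional Hilbert space can all be broadcast by one and the same quantum channel Λ: S → S₁S₂ if and only if they pairwise commute, [ρ_j, ρ_k] = 0 for all j, k. -/

import Mathlib

open Matrix Kronecker ComplexOrder

section Defs
variable {α α' β β' γ : Type*} [Fintype α] [DecidableEq α] [Fintype α'] [DecidableEq α']
  [Fintype β] [DecidableEq β] [Fintype β'] [DecidableEq β'] [Fintype γ] [DecidableEq γ]

/-- A density matrix: a positive semidefinite matrix with unit trace. -/
def IsDensityMatrix (ρ : Matrix β β ℂ) : Prop := ρ.PosSemidef ∧ ρ.trace = 1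

/-- The map `id_α ⊗ Λ` induced on matrices over the product index type. -/
noncomputable def idTensor (Λ : Matrix β β ℂ →ₗ[ℂ] Matrix β' β' ℂ) :
    Matrix (α × β) (α × β) ℂ →ₗ[ℂ] Matrix (α × β') (α × β') ℂ where
  toFun M := Matrix.of fun p q => Λ (Matrix.of fun b b' => M (p.1, b) (q.1, b')) p.2 q.2
  map_add' M N := by
    ext p q
    show Λ (Matrix.of fun b b' => (M + N) (p.1, b) (q.1, b')) p.2 q.2 = _
    have h : (Matrix.of fun b b' => (M + N) (p.1, b) (q.1, b')) =
        (Matrix.of fun b b' => M (p.1, b) (q.1, b')) +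
          (Matrix.of fun b b' => N (p.1, b) (q.1, b')) := rfl
    rw [h, map_add]
    rfl
  map_smul' c M := by
    ext p q
    show Λ (Matrix.of fun b b' => (c • M) (p.1, b) (q.1, b')) p.2 q.2 = _
    have h : (Matrix.of fun b b' => (c • M) (p.1, b) (q.1, b')) =
        c • (Matrix.of fun b b' => M (p.1, b) (q.1, b')) := rfl
    rw [h, _root_.map_smul]
    rfl

/-- Complete positivity: all extensions `id ⊗ Λ` preserve positive semidefiniteness. -/
def IsCompletelyPositive (Λ : Matrix β β ℂ →ₗ[ℂ] Matrix β' β' ℂ) : Prop :=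
  ∀ (k : ℕ) (M : Matrix (Fin k × β) (Fin k × β) ℂ), M.PosSemidef → (idTensor Λ M).PosSemidef

/-- A quantum channel: a completely positive trace-preserving linear map. -/
def IsQuantumChannel (Λ : Matrix β β ℂ →ₗ[ℂ] Matrix β' β' ℂ) : Prop :=
  IsCompletelyPositive Λ ∧ ∀ X, (Λ X).trace = X.trace

/-- Partial trace over the second tensor factor. -/
noncomputable def ptraceRight (M : Matrix (α × β) (α × β) ℂ) : Matrix α α ℂ :=
  Matrix.of fun a a' => ∑ b, M (a, b) (a', b)

/-- Partial trace over the first tensor factor. -/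
noncomputable def ptraceLeft (M : Matrix (α × β) (α × β) ℂ) : Matrix β β ℂ :=
  Matrix.of fun b b' => ∑ a, M (a, b) (a, b')

end Defs

/-!
If a channel broadcasts `ρ` and `τ`, it broadcasts `σ = ρ + τ`. Let `L` be the symmetric logarithmic
derivative, the Hermitian solution of `Lσ + σL = ρ`. The two marginals of a broadcast carry all the
Fisher information `tr (LσL)` of the original: with `A = L ⊗ 1` and with `A = 1 ⊗ L`,
`tr (Λ(ρ) A) = tr (ρL)` and `tr (A Λ(σ) A) = tr (LσL)`. These are the equality cases of the
monotonicity inequality coming from the positivity of the image under `id₂ ⊗ Λ` of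
`[LσL, Lσ; σL, σ]`, so `Λ(σL) = Λ(σ) A` for both choices. Comparing them,
`Λ(σ) (L ⊗ 1) = Λ(σ) (1 ⊗ L)`, whose partial trace gives `σL = Lσ`; hence `ρ = 2Lσ` commutes with `σ`
and with `τ`.

Conversely, commuting Hermitian matrices have a common orthonormal eigenbasis; measuring in that
basis and preparing two copies of the observed basis state broadcasts all of them.
-/

section PosSemidef
variable {𝕜 m n : Type*} [RCLike 𝕜]

open scoped MatrixOrder Matrix.Norms.L2Operator in
lemma exists_eq_conjTranspose_mul_self_of_posSemidef [Fintype n] {M : Matrix n n 𝕜}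
    (hM : M.PosSemidef) : ∃ B : Matrix n n 𝕜, M = Bᴴ * B := by
  classical
  exact CStarAlgebra.nonneg_iff_eq_star_mul_self.mp hM.nonneg

lemma mul_eq_zero_of_trace_conjTranspose_mul_mul_eq_zero [Fintype m] [Fintype n]
    {M : Matrix m m 𝕜} (hM : M.PosSemidef) {T : Matrix m n 𝕜} (h : (Tᴴ * M * T).trace = 0) :
    M * T = 0 := by
  obtain ⟨B, rfl⟩ := exists_eq_conjTranspose_mul_self_of_posSemidef hM
  have hBT : B * T = 0 := by
    rw [← trace_conjTranspose_mul_self_eq_zero_iff, conjTranspose_mul, ← h]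
    simp only [Matrix.mul_assoc]
  rw [Matrix.mul_assoc, hBT, Matrix.mul_zero]

lemma eq_mul_of_posSemidef_fromBlocks [Fintype m] [Fintype n]
    {P : Matrix n n 𝕜} {Q : Matrix n m 𝕜} {R : Matrix m n 𝕜} {S : Matrix m m 𝕜}
    (hM : (fromBlocks P Q R S).PosSemidef) {A : Matrix m n 𝕜}
    (h : P.trace - (Q * A).trace - (Aᴴ * R).trace + (Aᴴ * S * A).trace = 0) : R = S * A := by
  classical
  let T : Matrix (n ⊕ m) n 𝕜 := fromRows 1 (-A)
  have hMT : fromBlocks P Q R S * T = fromRows (P - Q * A) (R - S * A) := by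
    simp [T, fromBlocks_mul_fromRows, sub_eq_add_neg]
  have htrace : (Tᴴ * fromBlocks P Q R S * T).trace = 0 := by
    rw [Matrix.mul_assoc, hMT, conjTranspose_fromRows_eq_fromCols_conjTranspose,
      fromCols_mul_fromRows, ← h]
    simp only [conjTranspose_one, conjTranspose_neg, Matrix.one_mul, Matrix.neg_mul,
      Matrix.mul_sub, Matrix.mul_assoc, trace_add, trace_neg, trace_sub]
    ring
  have hzero := mul_eq_zero_of_trace_conjTranspose_mul_mul_eq_zero hM htrace
  rw [hMT] at hzero
  ext i j
  exact sub_eq_zero.mp (congrFun₂ hzero (Sum.inr i) j)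

lemma apply_eq_zero_of_posSemidef_of_diag_eq_zero {M : Matrix n n 𝕜} (hM : M.PosSemidef) {j : n}
    (hj : M j j = 0) (i : n) : M i j = 0 := by
  let f (k : Fin 2) : n := if k = 0 then i else j
  have hcol : M.submatrix f f *ᵥ Pi.single 1 1 = 0 :=
    ((hM.submatrix f).dotProduct_mulVec_zero_iff _).1 (by simp [f, hj])
  simpa [f] using congrFun hcol 0

end PosSemidef

section Lyapunov
variable {𝕜 n : Type*} [RCLike 𝕜] [Fintype n]

lemma exists_isHermitian_mul_diagonal_add_diagonal_mul_eq [DecidableEq n] {s : n → ℝ}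
    {R : Matrix n n 𝕜} (hR : R.PosSemidef) (hsR : (diagonal (RCLike.ofReal ∘ s) - R).PosSemidef) :
    ∃ L : Matrix n n 𝕜, L.IsHermitian ∧
      L * diagonal (RCLike.ofReal ∘ s) + diagonal (RCLike.ofReal ∘ s) * L = R := by
  have hle (a : n) : R a a ≤ s a := by simpa using hsR.diag_nonneg (i := a)
  have hs (a : n) : 0 ≤ s a := RCLike.ofReal_nonneg.mp (hR.diag_nonneg.trans (hle a))
  -- Where `s a + s b = 0` the quotient is `0`, which is right because `R a b` vanishes there.
  refine ⟨of fun a b ↦ R a b / (s a + s b), ?_, ?_⟩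
  · ext a b
    simp [← hR.1.apply a b, add_comm]
  · ext a b
    suffices R a b / (s a + s b) * s b + s a * (R a b / (s a + s b)) = R a b by simpa
    by_cases hab : s a + s b = 0
    · have hb : s b = 0 := by linarith [hs a, hs b]
      have hRb : R b b = 0 := le_antisymm (by simpa [hb] using hle b) hR.diag_nonneg
      simp [apply_eq_zero_of_posSemidef_of_diag_eq_zero hR hRb a]
    · have hab' : (s a + s b : 𝕜) ≠ 0 := by exact_mod_cast hab
      field_simp
      ring

lemma exists_isHermitian_mul_add_mul_eq {σ ρ : Matrix n n 𝕜} (hρ : ρ.PosSemidef)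
    (hρσ : (σ - ρ).PosSemidef) : ∃ L : Matrix n n 𝕜, L.IsHermitian ∧ L * σ + σ * L = ρ := by
  classical
  have hσ : σ.IsHermitian := by simpa using (hρσ.add hρ).1
  let φ := Unitary.conjStarAlgAut 𝕜 (Matrix n n 𝕜) hσ.eigenvectorUnitary
  have hφ {X : Matrix n n 𝕜} (hX : X.PosSemidef) : (φ.symm X).PosSemidef :=
    hX.conjTranspose_mul_mul_same _
  have hσφ : φ.symm σ = diagonal (RCLike.ofReal ∘ hσ.eigenvalues) :=
    φ.symm_apply_eq.mpr hσ.spectral_theorem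
  obtain ⟨L, hL, hLρ⟩ := exists_isHermitian_mul_diagonal_add_diagonal_mul_eq (hφ hρ)
    (by simpa only [map_sub, hσφ] using hφ hρσ)
  refine ⟨φ L, hL.isSelfAdjoint.map φ, ?_⟩
  rw [← φ.apply_symm_apply σ, hσφ, ← map_mul, ← map_mul, ← map_add, hLρ, φ.apply_symm_apply]

end Lyapunov

section PartialTrace
variable {α β : Type*}

lemma ptraceRight_add [Fintype β] (M N : Matrix (α × β) (α × β) ℂ) :
    ptraceRight (M + N) = ptraceRight M + ptraceRight N := by
  ext
  simp [ptraceRight, Finset.sum_add_distrib]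

lemma ptraceLeft_add [Fintype α] (M N : Matrix (α × β) (α × β) ℂ) :
    ptraceLeft (M + N) = ptraceLeft M + ptraceLeft N := by
  ext
  simp [ptraceLeft, Finset.sum_add_distrib]

lemma ptraceRight_sum_smul_kronecker {ι : Type*} [Fintype β] (s : Finset ι) (c : ι → ℂ)
    (P : ι → Matrix α α ℂ) (Q : ι → Matrix β β ℂ) :
    ptraceRight (∑ i ∈ s, c i • P i ⊗ₖ Q i) = ∑ i ∈ s, (c i * (Q i).trace) • P i := by
  ext a a'
  simp only [ptraceRight, of_apply, Matrix.sum_apply, Matrix.smul_apply, kronecker_apply, trace,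
    diag_apply, smul_eq_mul]
  rw [Finset.sum_comm]
  refine Finset.sum_congr rfl fun i _ ↦ ?_
  rw [Finset.mul_sum, Finset.sum_mul]
  exact Finset.sum_congr rfl fun b _ ↦ by ring

lemma ptraceLeft_sum_smul_kronecker {ι : Type*} [Fintype α] (s : Finset ι) (c : ι → ℂ)
    (P : ι → Matrix α α ℂ) (Q : ι → Matrix β β ℂ) :
    ptraceLeft (∑ i ∈ s, c i • P i ⊗ₖ Q i) = ∑ i ∈ s, (c i * (P i).trace) • Q i := by
  ext b b'
  simp only [ptraceLeft, of_apply, Matrix.sum_apply, Matrix.smul_apply, kronecker_apply, trace,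
    diag_apply, smul_eq_mul]
  rw [Finset.sum_comm]
  refine Finset.sum_congr rfl fun i _ ↦ ?_
  rw [Finset.mul_sum, Finset.sum_mul]
  exact Finset.sum_congr rfl fun a _ ↦ by ring

lemma posSemidef_ptraceRight [Fintype β] {M : Matrix (α × β) (α × β) ℂ} (hM : M.PosSemidef) :
    (ptraceRight M).PosSemidef := by
  have hsum : ptraceRight M = ∑ b, M.submatrix (·, b) (·, b) := by
    ext
    simp [ptraceRight, Matrix.sum_apply]
  exact hsum ▸ posSemidef_sum _ fun b _ ↦ hM.submatrix (·, b)

variable [Fintype α] [Fintype β]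

lemma trace_ptraceRight (M : Matrix (α × β) (α × β) ℂ) : (ptraceRight M).trace = M.trace := by
  simp [trace, ptraceRight, Fintype.sum_prod_type]

lemma trace_ptraceLeft (M : Matrix (α × β) (α × β) ℂ) : (ptraceLeft M).trace = M.trace := by
  simp [trace, ptraceLeft, Fintype.sum_prod_type_right]

lemma ptraceRight_mul_kronecker_one [DecidableEq β] (S : Matrix (α × β) (α × β) ℂ)
    (X : Matrix α α ℂ) : ptraceRight (S * X ⊗ₖ 1) = ptraceRight S * X := by
  ext
  simpa [ptraceRight, mul_apply, Fintype.sum_prod_type, one_apply, Finset.sum_mul]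
    using Finset.sum_comm

lemma ptraceRight_kronecker_one_mul [DecidableEq β] (X : Matrix α α ℂ)
    (S : Matrix (α × β) (α × β) ℂ) : ptraceRight (X ⊗ₖ 1 * S) = X * ptraceRight S := by
  ext
  simpa [ptraceRight, mul_apply, Fintype.sum_prod_type, one_apply, Finset.mul_sum]
    using Finset.sum_comm

lemma ptraceLeft_mul_one_kronecker [DecidableEq α] (S : Matrix (α × β) (α × β) ℂ)
    (X : Matrix β β ℂ) : ptraceLeft (S * 1 ⊗ₖ X) = ptraceLeft S * X := by
  ext
  simpa [ptraceLeft, mul_apply, Fintype.sum_prod_type_right, one_apply, Finset.sum_mul]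
    using Finset.sum_comm

lemma ptraceRight_one_kronecker_mul_comm [DecidableEq α] (X : Matrix β β ℂ)
    (S : Matrix (α × β) (α × β) ℂ) : ptraceRight (1 ⊗ₖ X * S) = ptraceRight (S * 1 ⊗ₖ X) := by
  ext
  simp only [ptraceRight, mul_apply, of_apply, Fintype.sum_prod_type_right, kronecker_apply,
    one_apply, ite_mul, one_mul, zero_mul, mul_ite, mul_zero, Finset.sum_ite_eq,
    Finset.sum_ite_eq', Finset.mem_univ, if_true]
  rw [Finset.sum_comm]
  simp only [mul_comm]

lemma trace_mul_kronecker_one [DecidableEq β] (S : Matrix (α × β) (α × β) ℂ) (X : Matrix α α ℂ) :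
    (S * X ⊗ₖ 1).trace = (ptraceRight S * X).trace := by
  rw [← trace_ptraceRight, ptraceRight_mul_kronecker_one]

lemma trace_mul_one_kronecker [DecidableEq α] (S : Matrix (α × β) (α × β) ℂ) (X : Matrix β β ℂ) :
    (S * 1 ⊗ₖ X).trace = (ptraceLeft S * X).trace := by
  rw [← trace_ptraceLeft, ptraceLeft_mul_one_kronecker]

lemma commute_ptraceRight_of_mul_kronecker_one_eq [DecidableEq α] [DecidableEq β]
    {S : Matrix (α × β) (α × β) ℂ} (hS : S.IsHermitian) {X : Matrix α α ℂ} (hX : X.IsHermitian)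
    {Y : Matrix β β ℂ} (hY : Y.IsHermitian) (h : S * X ⊗ₖ 1 = S * 1 ⊗ₖ Y) :
    Commute (ptraceRight S) X := by
  have hadj : X ⊗ₖ 1 * S = 1 ⊗ₖ Y * S := by
    simpa [conjTranspose_kronecker, hS.eq, hX.eq, hY.eq] using congrArg conjTranspose h
  calc ptraceRight S * X = ptraceRight (S * 1 ⊗ₖ Y) := by rw [← h, ptraceRight_mul_kronecker_one]
    _ = ptraceRight (X ⊗ₖ 1 * S) := by rw [hadj, ptraceRight_one_kronecker_mul_comm]
    _ = X * ptraceRight S := ptraceRight_kronecker_one_mul X S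

lemma posSemidef_ptraceRight_one_kronecker_mul [DecidableEq α] {E : Matrix β β ℂ}
    (hE : E.PosSemidef) {M : Matrix (α × β) (α × β) ℂ} (hM : M.PosSemidef) :
    (ptraceRight (1 ⊗ₖ E * M)).PosSemidef := by
  obtain ⟨B, rfl⟩ := exists_eq_conjTranspose_mul_self_of_posSemidef hE
  have hB : (1 : Matrix α α ℂ) ⊗ₖ (Bᴴ * B) = 1 ⊗ₖ Bᴴ * 1 ⊗ₖ B := by
    rw [← mul_kronecker_mul, Matrix.one_mul]
  rw [hB, Matrix.mul_assoc, ptraceRight_one_kronecker_mul_comm]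
  refine posSemidef_ptraceRight ?_
  have hconj := hM.mul_mul_conjTranspose_same ((1 : Matrix α α ℂ) ⊗ₖ B)
  rwa [conjTranspose_kronecker, conjTranspose_one] at hconj

end PartialTrace

section Monotonicity
variable {m n : Type*}

lemma IsCompletelyPositive.posSemidef_fromBlocks_map {Λ : Matrix m m ℂ →ₗ[ℂ] Matrix n n ℂ}
    (hΛ : IsCompletelyPositive Λ) {A B C D : Matrix m m ℂ} (h : (fromBlocks A B C D).PosSemidef) :
    (fromBlocks (Λ A) (Λ B) (Λ C) (Λ D)).PosSemidef := by
  let e (p : Fin 2 × m) : m ⊕ m := if p.1 = 0 then .inl p.2 else .inr p.2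
  convert (hΛ 2 _ (h.submatrix e)).submatrix (Sum.elim (Prod.mk 0) (Prod.mk 1)) using 1
  ext (i | i) (j | j) <;> rfl

lemma IsCompletelyPositive.posSemidef_map {Λ : Matrix m m ℂ →ₗ[ℂ] Matrix n n ℂ}
    (hΛ : IsCompletelyPositive Λ) {M : Matrix m m ℂ} (hM : M.PosSemidef) : (Λ M).PosSemidef :=
  (hΛ 1 _ (hM.submatrix Prod.snd)).submatrix (Prod.mk 0)

lemma posSemidef_fromBlocks_mul_mul_conjTranspose [Fintype m] [Finite n] {σ : Matrix m m ℂ}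
    (hσ : σ.PosSemidef) (L : Matrix n m ℂ) :
    (fromBlocks (L * σ * Lᴴ) (L * σ) (σ * Lᴴ) σ).PosSemidef := by
  classical
  have := Fintype.ofFinite n
  have hconj := hσ.mul_mul_conjTranspose_same (fromRows L (1 : Matrix m m ℂ))
  rwa [fromRows_mul, conjTranspose_fromRows_eq_fromCols_conjTranspose, fromRows_mul_fromCols,
    conjTranspose_one, Matrix.one_mul, Matrix.mul_one, Matrix.mul_one] at hconj

lemma IsQuantumChannel.map_mul_eq_map_mul [Fintype m] [Fintype n]
    {Λ : Matrix m m ℂ →ₗ[ℂ] Matrix n n ℂ} (hΛ : IsQuantumChannel Λ) {ρ σ L : Matrix m m ℂ}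
    {A : Matrix n n ℂ} (hσ : σ.PosSemidef) (hL : L.IsHermitian) (hA : A.IsHermitian)
    (hρ : L * σ + σ * L = ρ) (hρA : (Λ ρ * A).trace = (ρ * L).trace)
    (hσA : (Λ σ * (A * A)).trace = (σ * (L * L)).trace) : Λ (σ * L) = Λ σ * A := by
  have hblock := posSemidef_fromBlocks_mul_mul_conjTranspose hσ L
  rw [hL.eq] at hblock
  refine eq_mul_of_posSemidef_fromBlocks (hΛ.1.posSemidef_fromBlocks_map hblock) ?_
  have hcorner : (Λ (L * σ * L)).trace = (σ * (L * L)).trace := by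
    rw [hΛ.2, Matrix.mul_assoc, trace_mul_comm, Matrix.mul_assoc]
  have hcross : (Λ (L * σ) * A).trace + (Aᴴ * Λ (σ * L)).trace = 2 * (σ * (L * L)).trace := by
    calc _ = (Λ ρ * A).trace := by
          rw [hA.eq, trace_mul_comm A, ← trace_add, ← Matrix.add_mul, ← map_add, hρ]
      _ = (L * σ * L).trace + (σ * L * L).trace := by rw [hρA, ← hρ, Matrix.add_mul, trace_add]
      _ = 2 * (σ * (L * L)).trace := by
          rw [← hΛ.2 (L * σ * L), hcorner, Matrix.mul_assoc, two_mul]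
  have hsquare : (Aᴴ * Λ σ * A).trace = (σ * (L * L)).trace := by
    rw [hA.eq, Matrix.mul_assoc, trace_mul_comm, Matrix.mul_assoc, hσA]
  linear_combination hcorner - hcross + hsquare

end Monotonicity

section Broadcasting
variable {n : Type*} [Fintype n]

/-- The map `Λ` broadcasts `ρ`: both marginals of `Λ ρ` are equal to `ρ`. -/
def Broadcasts (Λ : Matrix n n ℂ →ₗ[ℂ] Matrix (n × n) (n × n) ℂ) (ρ : Matrix n n ℂ) : Prop :=
  ptraceRight (Λ ρ) = ρ ∧ ptraceLeft (Λ ρ) = ρ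

variable {Λ : Matrix n n ℂ →ₗ[ℂ] Matrix (n × n) (n × n) ℂ} {ρ τ : Matrix n n ℂ}

lemma Broadcasts.add (hρ : Broadcasts Λ ρ) (hτ : Broadcasts Λ τ) : Broadcasts Λ (ρ + τ) := by
  constructor
  · rw [map_add, ptraceRight_add, hρ.1, hτ.1]
  · rw [map_add, ptraceLeft_add, hρ.2, hτ.2]

lemma Broadcasts.commute_of_mul_add_mul_eq {σ L : Matrix n n ℂ} (hΛ : IsQuantumChannel Λ)
    (hΛσ : Broadcasts Λ σ) (hΛρ : Broadcasts Λ ρ) (hσ : σ.PosSemidef) (hL : L.IsHermitian)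
    (hρ : L * σ + σ * L = ρ) : Commute σ L := by
  classical
  have hleft : Λ (σ * L) = Λ σ * L ⊗ₖ 1 := by
    refine hΛ.map_mul_eq_map_mul hσ hL (by simp [IsHermitian, conjTranspose_kronecker, hL.eq]) hρ
      ?_ ?_
    · rw [trace_mul_kronecker_one, hΛρ.1]
    · rw [← mul_kronecker_mul, Matrix.one_mul, trace_mul_kronecker_one, hΛσ.1]
  have hright : Λ (σ * L) = Λ σ * 1 ⊗ₖ L := by
    refine hΛ.map_mul_eq_map_mul hσ hL (by simp [IsHermitian, conjTranspose_kronecker, hL.eq]) hρ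
      ?_ ?_
    · rw [trace_mul_one_kronecker, hΛρ.2]
    · rw [← mul_kronecker_mul, Matrix.one_mul, trace_mul_one_kronecker, hΛσ.2]
  simpa only [hΛσ.1] using commute_ptraceRight_of_mul_kronecker_one_eq (hΛ.1.posSemidef_map hσ).1
    hL hL (hleft.symm.trans hright)

lemma Broadcasts.commute (hΛρ : Broadcasts Λ ρ) (hΛτ : Broadcasts Λ τ) (hΛ : IsQuantumChannel Λ)
    (hρ : ρ.PosSemidef) (hτ : τ.PosSemidef) : Commute ρ τ := by
  obtain ⟨L, hL, hLρ⟩ := exists_isHermitian_mul_add_mul_eq (σ := ρ + τ) hρ (by simpa using hτ)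
  have hσL : Commute (ρ + τ) L :=
    (hΛρ.add hΛτ).commute_of_mul_add_mul_eq hΛ hΛρ (hρ.add hτ) hL hLρ
  have hσρ : Commute (ρ + τ) ρ := by
    nth_rw 2 [← hLρ]
    exact (hσL.mul_right (.refl _)).add_right ((Commute.refl _).mul_right hσL)
  simpa using (hσρ.sub_left (.refl ρ)).symm

end Broadcasting

section MeasurePrepare
variable {ι m n : Type*} [Fintype ι] [Fintype n]

/-- The measure-and-prepare map of the observable with effects `E i` and the states `τ i`:
outcome `i`, which has probability `tr (E i * X)`, leads to the preparation of `τ i`. -/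
def measurePrepare (E : ι → Matrix n n ℂ) (τ : ι → Matrix m m ℂ) :
    Matrix n n ℂ →ₗ[ℂ] Matrix m m ℂ where
  toFun X := ∑ i, (E i * X).trace • τ i
  map_add' X Y := by simp only [Matrix.mul_add, trace_add, add_smul, Finset.sum_add_distrib]
  map_smul' c X := by
    simp only [Matrix.mul_smul, trace_smul, smul_assoc, Finset.smul_sum, RingHom.id_apply]

lemma measurePrepare_apply (E : ι → Matrix n n ℂ) (τ : ι → Matrix m m ℂ) (X : Matrix n n ℂ) :
    measurePrepare E τ X = ∑ i, (E i * X).trace • τ i := rfl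

lemma idTensor_measurePrepare {α : Type*} [Fintype α] [DecidableEq α] (E : ι → Matrix n n ℂ)
    (τ : ι → Matrix m m ℂ) (M : Matrix (α × n) (α × n) ℂ) :
    idTensor (measurePrepare E τ) M = ∑ i, ptraceRight (1 ⊗ₖ E i * M) ⊗ₖ τ i := by
  ext p q
  simp [idTensor, measurePrepare_apply, ptraceRight, Matrix.sum_apply, trace, mul_apply,
    Fintype.sum_prod_type_right, one_apply]

lemma isQuantumChannel_measurePrepare [Fintype m] [DecidableEq n] {E : ι → Matrix n n ℂ}
    {τ : ι → Matrix m m ℂ} (hE : ∀ i, (E i).PosSemidef) (hE_sum : ∑ i, E i = 1)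
    (hτ : ∀ i, IsDensityMatrix (τ i)) : IsQuantumChannel (measurePrepare E τ) := by
  refine ⟨fun k M hM ↦ ?_, fun X ↦ ?_⟩
  · rw [idTensor_measurePrepare]
    exact posSemidef_sum _ fun i _ ↦
      (posSemidef_ptraceRight_one_kronecker_mul (hE i) hM).kronecker (hτ i).1
  · simp only [measurePrepare_apply, trace_sum, trace_smul, (hτ _).2, smul_eq_mul, mul_one]
    rw [← trace_sum, ← Finset.sum_mul, hE_sum, Matrix.one_mul]

lemma broadcasts_measurePrepare [DecidableEq ι] {E : ι → Matrix n n ℂ}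
    (hE : ∀ i, (E i).trace = 1) (hE_mul : ∀ i j, (E i * E j).trace = if i = j then 1 else 0)
    (d : ι → ℂ) : Broadcasts (measurePrepare E fun i ↦ E i ⊗ₖ E i) (∑ i, d i • E i) := by
  have happly : measurePrepare E (fun i ↦ E i ⊗ₖ E i) (∑ i, d i • E i) =
      ∑ i, d i • E i ⊗ₖ E i := by
    simp [measurePrepare_apply, hE_mul]
  constructor
  · simp [happly, ptraceRight_sum_smul_kronecker, hE]
  · simp [happly, ptraceLeft_sum_smul_kronecker, hE]

end MeasurePrepare

section JointDiagonalization
variable {𝕜 ι n : Type*} [RCLike 𝕜] [Fintype n]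

lemma exists_orthonormalBasis_forall_apply_eq_smul {V : Type*} [NormedAddCommGroup V]
    [InnerProductSpace 𝕜 V] [FiniteDimensional 𝕜 V] (hn : Module.finrank 𝕜 V = Fintype.card n)
    {T : ι → Module.End 𝕜 V} (hT : ∀ i, (T i).IsSymmetric)
    (hcomm : Pairwise (Function.onFun Commute T)) :
    ∃ (b : OrthonormalBasis n 𝕜 V) (d : ι → n → 𝕜), ∀ i c, T i (b c) = d i c • b c := by
  classical
  let W (χ : ι → 𝕜) : Submodule 𝕜 V := ⨅ i, (T i).eigenspace (χ i)
  have hW : DirectSum.IsInternal W :=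
    LinearMap.IsSymmetric.directSum_isInternal_of_pairwise_commute hT hcomm
  have hW' := DirectSum.isInternal_ne_bot_iff.mpr hW
  have : Finite {χ // W χ ≠ ⊥} := WellFoundedGT.finite_ne_bot_of_iSupIndep hW.submodule_iSupIndep
  have := Fintype.ofFinite {χ // W χ ≠ ⊥}
  have hortho : OrthogonalFamily 𝕜 (fun χ : {χ // W χ ≠ ⊥} ↦ W χ) fun χ ↦ (W χ).subtypeₗᵢ :=
    (LinearMap.IsSymmetric.orthogonalFamily_iInf_eigenspaces hT).comp Subtype.val_injective
  let e := Fintype.equivFin n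
  let χ (c : n) : ι → 𝕜 := (hW'.subordinateOrthonormalBasisIndex hn (e c) hortho).1
  refine ⟨(hW'.subordinateOrthonormalBasis hn hortho).reindex e.symm, fun i c ↦ χ c i,
    fun i c ↦ ?_⟩
  rw [OrthonormalBasis.reindex_apply, e.symm_symm]
  have hmem := hW'.subordinateOrthonormalBasis_subordinate hn (e c) hortho
  exact Module.End.mem_eigenspace_iff.mp (Submodule.mem_iInf _ |>.mp hmem i)

lemma exists_forall_eq_conjStarAlgAut_diagonal [DecidableEq n] {A : ι → Matrix n n 𝕜}
    (hA : ∀ i, (A i).IsHermitian) (hcomm : ∀ i j, Commute (A i) (A j)) :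
    ∃ (U : unitaryGroup n 𝕜) (d : ι → n → 𝕜),
      ∀ i, A i = Unitary.conjStarAlgAut 𝕜 _ U (diagonal (d i)) := by
  obtain ⟨b, d, hb⟩ := exists_orthonormalBasis_forall_apply_eq_smul finrank_euclideanSpace
    (fun i ↦ isSymmetric_toEuclideanLin_iff.mpr (hA i))
    (fun i j _ ↦ by
      ext1 x
      simp [toEuclideanLin, toLpLin_apply, (hcomm i j).eq])
  let U : unitaryGroup n 𝕜 := ⟨(EuclideanSpace.basisFun n 𝕜).toBasis.toMatrix b.toBasis,
    (EuclideanSpace.basisFun n 𝕜).toMatrix_orthonormalBasis_mem_unitary b⟩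
  refine ⟨U, d, fun i ↦ ?_⟩
  have hAU : A i * U = U * diagonal (d i) := by
    ext a c
    have hba : (A i *ᵥ (b c).ofLp) a = d i c * b c a := congrFun (congrArg WithLp.ofLp (hb i c)) a
    rw [mul_diagonal, mul_comm]
    exact hba
  rw [Unitary.conjStarAlgAut_apply, ← hAU, Matrix.mul_assoc, Unitary.mul_star_self_of_mem U.2,
    Matrix.mul_one]

lemma exists_posSemidef_resolution_of_commute [DecidableEq n] {A : ι → Matrix n n 𝕜}
    (hA : ∀ i, (A i).IsHermitian) (hcomm : ∀ i j, Commute (A i) (A j)) :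
    ∃ E : n → Matrix n n 𝕜, (∀ c, (E c).PosSemidef) ∧ ∑ c, E c = 1 ∧ (∀ c, (E c).trace = 1) ∧
      (∀ c c', (E c * E c').trace = if c = c' then 1 else 0) ∧
      ∀ i, ∃ d : n → 𝕜, A i = ∑ c, d c • E c := by
  obtain ⟨U, d, hAU⟩ := exists_forall_eq_conjStarAlgAut_diagonal hA hcomm
  let φ := Unitary.conjStarAlgAut 𝕜 (Matrix n n 𝕜) U
  have hφ_trace (X : Matrix n n 𝕜) : (φ X).trace = X.trace := by
    rw [Unitary.conjStarAlgAut_apply, Matrix.mul_assoc, trace_mul_comm, Matrix.mul_assoc,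
      Unitary.star_mul_self_of_mem U.2, Matrix.mul_one]
  have hφ_diagonal (v : n → 𝕜) : φ (diagonal v) = ∑ c, v c • φ (single c c 1) := by
    simp_rw [← map_smul, ← map_sum, smul_single, smul_eq_mul, mul_one, sum_single_eq_diagonal]
  have hφ_posSemidef (c : n) : (φ (single c c 1)).PosSemidef := by
    rw [← diagonal_single]
    exact (PosSemidef.diagonal (Pi.single_nonneg.mpr zero_le_one)).mul_mul_conjTranspose_same _
  refine ⟨fun c ↦ φ (single c c 1), hφ_posSemidef, ?_, fun c ↦ ?_, fun c c' ↦ ?_,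
    fun i ↦ ⟨d i, (hAU i).trans (hφ_diagonal (d i))⟩⟩
  · simpa using (hφ_diagonal 1).symm
  · rw [hφ_trace, trace_single_eq_same]
  · rw [← map_mul, hφ_trace]
    split_ifs with h
    · rw [h, single_mul_single_same, trace_single_eq_same, mul_one]
    · rw [single_mul_single_of_ne _ _ _ _ h, trace_zero]

end JointDiagonalization

theorem no_broadcasting_family_general {ι n : Type*} [Fintype n]
    (ρs : ι → Matrix n n ℂ) (hρs : ∀ i, (ρs i).PosSemidef) :
    (∃ Λ : Matrix n n ℂ →ₗ[ℂ] Matrix (n × n) (n × n) ℂ, IsQuantumChannel Λ ∧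
        ∀ i, ptraceRight (Λ (ρs i)) = ρs i ∧ ptraceLeft (Λ (ρs i)) = ρs i) ↔
      ∀ i j, ρs i * ρs j = ρs j * ρs i := by
  classical
  constructor
  · rintro ⟨Λ, hΛ, hρΛ⟩ i j
    exact Broadcasts.commute (hρΛ i) (hρΛ j) hΛ (hρs i) (hρs j)
  · intro hcomm
    obtain ⟨E, hE, hE_sum, hE_trace, hE_mul, hρE⟩ :=
      exists_posSemidef_resolution_of_commute (fun i ↦ (hρs i).1) hcomm
    refine ⟨measurePrepare E fun c ↦ E c ⊗ₖ E c, isQuantumChannel_measurePrepare hE hE_sum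
      fun c ↦ ⟨(hE c).kronecker (hE c), by simp [trace_kronecker, hE_trace]⟩, fun i ↦ ?_⟩
    obtain ⟨d, hd⟩ := hρE i
    exact hd ▸ broadcasts_measurePrepare hE_trace hE_mul d

/-- A finite collection of density matrices can all be broadcast by one and the same
quantum channel if and only if they pairwise commute. -/
theorem no_broadcasting_family {n : Type*} [Fintype n] [DecidableEq n] {k : ℕ}
    (ρs : Fin k → Matrix n n ℂ) (hρs : ∀ i, IsDensityMatrix (ρs i)) :
    (∃ Λ : Matrix n n ℂ →ₗ[ℂ] Matrix (n × n) (n × n) ℂ, IsQuantumChannel Λ ∧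
        ∀ i, ptraceRight (Λ (ρs i)) = ρs i ∧ ptraceLeft (Λ (ρs i)) = ρs i) ↔
      ∀ i j, ρs i * ρs j = ρs j * ρs i := by
  exact no_broadcasting_family_general ρs fun i ↦ (hρs i).1
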